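/- (Theorem 4.) Let (P*_{0,N}, P*_{1,N}) be a maximizer of Σ_j min{p_0(z_j), p_1(z_j)} over 𝒫^{η+ε}_{0,N} × 𝒫^{η+ε}_{1,N}, let P_0*, P_1* be their uniform smoothings over the partition cells {A_j}, and let φ* be the likelihood ratio test φ*(x) = 1{p_1*(x) ≥ p_0*(x)}. Then |P_E(φ*; P_0*, P_1*) − γ| ≤ L_0 ε, where γ = (1/2) sup_{P_0 ∈ 𝒫_0^η, P_1 ∈ 𝒫_1^η} (1 − TV(P_0, P_1)) and L_0 is the Lipschitz constant of g(θ) = sup_{P_0 ∈ 𝒫_0^θ, P_1 ∈ 𝒫_1^θ}(1 − TV(P_0, P_1)) on [Δ, η_0]. In particular P_E(φ*; P_0*, P_1*) = (1/2) Σ_j min{p*_{0,N}(z_j), p*_{1,N}(z_j)}. -/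

import Mathlib

open MeasureTheory

/-- The total variation distance between two measures:
`TV(P, Q) = sup over measurable sets A of |P(A) − Q(A)|`. -/
noncomputable def tv {Ω : Type*} [MeasurableSpace Ω] (P Q : Measure Ω) : ℝ :=
  ⨆ A : {A : Set Ω // MeasurableSet A}, |(P A.1).toReal - (Q A.1).toReal|

/-- The Bayes error with equal priors of a (randomized) test `φ` under `(P₀, P₁)`. -/
noncomputable def bayesError {Ω : Type*} [MeasurableSpace Ω]
    (φ : Ω → ℝ) (P0 P1 : Measure Ω) : ℝ :=
  (1 / 2) * ∫ x, φ x ∂P0 + (1 / 2) * ∫ x, (1 - φ x) ∂P1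

/-- The moment-constrained uncertainty set (probability measures supported on `X`,
with `k`-th moment within `θ` of the nominal moment). -/
def momentSetE {d : ℕ} (X : Set (EuclideanSpace ℝ (Fin d))) {K : ℕ}
    (ψ : Fin K → EuclideanSpace ℝ (Fin d) → ℝ)
    (Qhat : ProbabilityMeasure (EuclideanSpace ℝ (Fin d))) (θ : ℝ) :
    Set (ProbabilityMeasure (EuclideanSpace ℝ (Fin d))) :=
  {P | (P : Measure (EuclideanSpace ℝ (Fin d))) Xᶜ = 0 ∧
    ∀ k, |∫ x, ψ k x ∂(P : Measure (EuclideanSpace ℝ (Fin d))) -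
      ∫ x, ψ k x ∂(Qhat : Measure (EuclideanSpace ℝ (Fin d)))| ≤ θ}

/-- The worst-case affinity `g(θ) = sup_{P₀ ∈ 𝒫₀^θ, P₁ ∈ 𝒫₁^θ} (1 − TV(P₀, P₁))`. -/
noncomputable def worstAffinity {d : ℕ} (X : Set (EuclideanSpace ℝ (Fin d))) {K : ℕ}
    (ψ : Fin K → EuclideanSpace ℝ (Fin d) → ℝ)
    (Q0 Q1 : ProbabilityMeasure (EuclideanSpace ℝ (Fin d))) (θ : ℝ) : ℝ :=
  sSup {r : ℝ | ∃ P0 ∈ momentSetE X ψ Q0 θ, ∃ P1 ∈ momentSetE X ψ Q1 θ,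
    r = 1 - tv (P0 : Measure (EuclideanSpace ℝ (Fin d)))
      (P1 : Measure (EuclideanSpace ℝ (Fin d)))}

/-- The density of the uniform smoothing over the partition `{A_j}` of a pmf `p` on the
points `{z_j}`: `x ↦ ∑_j p_j 1{x ∈ A_j} / Leb(A_j)`. -/
noncomputable def smoothDensity {d N : ℕ} (A : Fin N → Set (EuclideanSpace ℝ (Fin d)))
    (p : Fin N → ℝ) (x : EuclideanSpace ℝ (Fin d)) : ℝ :=
  ∑ j, p j * Set.indicator (A j) (fun _ => ((volume (A j)).toReal)⁻¹) x

/-!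
The optimal discrete value `V = ∑ j, min (p0s j) (p1s j)` is squeezed between `g η` and `g (η + ε)`.
Collapsing every cell of the partition to its net point does not decrease the affinity `1 - TV` and
moves each moment by at most `ε`, so `g η ≤ V`; discrete measures are themselves competitors for
`g (η + ε)`, so `V ≤ g (η + ε)`. The likelihood ratio test has error `(1/2) ∫ min f₀ f₁`, and for
uniform smoothings this integral is again `V`. The Lipschitz property of `g` then bounds the gap.
-/

section TotalVariation

variable {Ω ι : Type*} [MeasurableSpace Ω] [Fintype ι]

lemma tv_nonneg (P Q : Measure Ω) : 0 ≤ tv P Q :=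
  Real.iSup_nonneg fun _ ↦ abs_nonneg _

lemma abs_measureReal_sub_le_tv (P Q : Measure Ω) [IsFiniteMeasure P] [IsFiniteMeasure Q]
    {B : Set Ω} (hB : MeasurableSet B) : |P.real B - Q.real B| ≤ tv P Q := by
  have hbdd : BddAbove (Set.range fun A : {A : Set Ω // MeasurableSet A} ↦
      |P.real A.1 - Q.real A.1|) := by
    refine ⟨P.real Set.univ + Q.real Set.univ, Set.forall_mem_range.mpr fun A ↦ ?_⟩
    exact abs_sub_le_of_nonneg_of_le measureReal_nonneg
      ((measureReal_mono A.1.subset_univ).trans (le_add_of_nonneg_right measureReal_nonneg))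
      measureReal_nonneg
      ((measureReal_mono A.1.subset_univ).trans (le_add_of_nonneg_left measureReal_nonneg))
  exact le_ciSup hbdd ⟨B, hB⟩

/-- The event on which the left-hand side is attained is the union of the cells with
`Q (A j) ≤ P (A j)`. -/
lemma sum_measureReal_sub_sum_min_le_tv (P Q : Measure Ω) [IsFiniteMeasure P] [IsFiniteMeasure Q]
    {A : ι → Set Ω} (hmeas : ∀ j, MeasurableSet (A j))
    (hdisj : Pairwise (Function.onFun Disjoint A)) :
    ∑ j, P.real (A j) - ∑ j, min (P.real (A j)) (Q.real (A j)) ≤ tv P Q := by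
  classical
  let s : Finset ι := {j | Q.real (A j) ≤ P.real (A j)}
  have hs (R : Measure Ω) [IsFiniteMeasure R] :
      R.real (⋃ j ∈ s, A j) = ∑ j ∈ s, R.real (A j) :=
    measureReal_biUnion_finset (fun _ _ _ _ hij ↦ hdisj hij) fun j _ ↦ hmeas j
  have hexcess (j : ι) : P.real (A j) - min (P.real (A j)) (Q.real (A j)) =
      if Q.real (A j) ≤ P.real (A j) then P.real (A j) - Q.real (A j) else 0 := by
    split_ifs with h
    · rw [min_eq_right h]
    · rw [min_eq_left (le_of_not_ge h), sub_self]
  calc ∑ j, P.real (A j) - ∑ j, min (P.real (A j)) (Q.real (A j))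
      = ∑ j ∈ s, (P.real (A j) - Q.real (A j)) := by
        rw [← Finset.sum_sub_distrib, Finset.sum_filter, Finset.sum_congr rfl fun j _ ↦ hexcess j]
    _ = P.real (⋃ j ∈ s, A j) - Q.real (⋃ j ∈ s, A j) := by
        rw [Finset.sum_sub_distrib, hs, hs]
    _ ≤ tv P Q := (le_abs_self _).trans <|
        abs_measureReal_sub_le_tv P Q (s.measurableSet_biUnion fun j _ ↦ hmeas j)

end TotalVariation

section DiscreteMeasure

variable {Ω ι : Type*} [MeasurableSpace Ω] [Fintype ι]

/-- The measure `∑ j, p j • δ_{z j}` on the points `z j`. Weights are real, to match the pmfs of the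
discretized problem; negative ones are truncated to `0`. -/
noncomputable def discreteMeasure (z : ι → Ω) (p : ι → ℝ) : Measure Ω :=
  ∑ j, ENNReal.ofReal (p j) • Measure.dirac (z j)

lemma isProbabilityMeasure_discreteMeasure (z : ι → Ω) {p : ι → ℝ} (hp : p ∈ stdSimplex ℝ ι) :
    IsProbabilityMeasure (discreteMeasure z p) :=
  ⟨by simp [discreteMeasure, ← ENNReal.ofReal_sum_of_nonneg fun j _ ↦ hp.1 j, hp.2]⟩

lemma discreteMeasure_compl_eq_zero [MeasurableSingletonClass Ω] {X : Set Ω} {z : ι → Ω}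
    (hz : ∀ j, z j ∈ X) (p : ι → ℝ) : discreteMeasure z p Xᶜ = 0 := by
  simp [discreteMeasure, hz]

lemma integral_discreteMeasure (z : ι → Ω) {p : ι → ℝ} (hp : ∀ j, 0 ≤ p j) {f : Ω → ℝ}
    (hf : Measurable f) : ∫ x, f x ∂(discreteMeasure z p) = ∑ j, p j * f (z j) := by
  rw [discreteMeasure, integral_finsetSum_measure fun j _ ↦
    (integrable_dirac' hf.stronglyMeasurable (by simp)).smul_measure ENNReal.ofReal_ne_top]
  simp [integral_dirac' _ _ hf.stronglyMeasurable, hp]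

lemma measureReal_discreteMeasure (z : ι → Ω) {p : ι → ℝ} (hp : ∀ j, 0 ≤ p j) {B : Set Ω}
    (hB : MeasurableSet B) :
    (discreteMeasure z p).real B = ∑ j, p j * B.indicator 1 (z j) := by
  rw [← integral_indicator_one hB, integral_discreteMeasure z hp (measurable_one.indicator hB)]

lemma sum_mul_sub_sum_mul_le_sum_sub_sum_min (p q : ι → ℝ) {t : ι → ℝ} (ht0 : ∀ j, 0 ≤ t j)
    (ht1 : ∀ j, t j ≤ 1) :
    ∑ j, p j * t j - ∑ j, q j * t j ≤ ∑ j, p j - ∑ j, min (p j) (q j) := by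
  simp only [← Finset.sum_sub_distrib]
  refine Finset.sum_le_sum fun j _ ↦ ?_
  calc p j * t j - q j * t j
      ≤ p j * t j - min (p j) (q j) * t j := by gcongr; exacts [ht0 j, min_le_right _ _]
    _ = (p j - min (p j) (q j)) * t j := (sub_mul ..).symm
    _ ≤ p j - min (p j) (q j) :=
        mul_le_of_le_one_right (sub_nonneg.mpr (min_le_left _ _)) (ht1 j)

lemma tv_discreteMeasure_le (z : ι → Ω) {p q : ι → ℝ} (hp : ∀ j, 0 ≤ p j) (hq : ∀ j, 0 ≤ q j)
    (hpq : ∑ j, p j = ∑ j, q j) :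
    tv (discreteMeasure z p) (discreteMeasure z q) ≤ ∑ j, p j - ∑ j, min (p j) (q j) := by
  have : Nonempty {A : Set Ω // MeasurableSet A} := ⟨⟨∅, .empty⟩⟩
  refine ciSup_le fun B ↦ ?_
  have ht0 (j : ι) : 0 ≤ B.1.indicator (1 : Ω → ℝ) (z j) :=
    Set.indicator_nonneg (fun _ _ ↦ zero_le_one) _
  have ht1 (j : ι) : B.1.indicator (1 : Ω → ℝ) (z j) ≤ 1 :=
    Set.indicator_le_self' (fun _ _ ↦ zero_le_one) _
  simp only [← measureReal_def, measureReal_discreteMeasure z hp B.2,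
    measureReal_discreteMeasure z hq B.2]
  refine abs_sub_le_iff.mpr ⟨sum_mul_sub_sum_mul_le_sum_sub_sum_min p q ht0 ht1, ?_⟩
  simpa only [hpq, min_comm] using sum_mul_sub_sum_mul_le_sum_sub_sum_min q p ht0 ht1

end DiscreteMeasure

section Partition

variable {Ω ι : Type*} [MeasurableSpace Ω] {P : Measure Ω} [IsFiniteMeasure P] {A : ι → Set Ω}

lemma integrable_of_forall_abs_sub_le [Finite ι] (hmeas : ∀ j, MeasurableSet (A j))
    (hP : P (⋃ j, A j)ᶜ = 0) {f : Ω → ℝ} (hf : AEStronglyMeasurable f P) {c : ι → ℝ} {ε : ℝ}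
    (hc : ∀ j, ∀ x ∈ A j, |f x - c j| ≤ ε) : Integrable f P := by
  have hcell (j : ι) : IntegrableOn f (A j) P :=
    Measure.integrableOn_of_bounded (measure_ne_top P _) hf <|
      (ae_restrict_mem (hmeas j)).mono fun x hx ↦
        (norm_le_norm_add_norm_sub' (f x) (c j)).trans (add_le_add_right (hc j x hx) _)
  rw [← Measure.restrict_eq_self_of_ae_mem (s := ⋃ j, A j) hP]
  exact integrableOn_finite_iUnion.mpr hcell

variable [Fintype ι]

lemma sum_measureReal_eq_measureReal_univ (hmeas : ∀ j, MeasurableSet (A j))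
    (hdisj : Pairwise (Function.onFun Disjoint A)) (hP : P (⋃ j, A j)ᶜ = 0) :
    ∑ j, P.real (A j) = P.real Set.univ := by
  rw [← measureReal_iUnion_fintype hdisj hmeas, measureReal_def, measureReal_def,
    measure_of_measure_compl_eq_zero hP]

lemma abs_sum_measureReal_mul_sub_integral_le (hmeas : ∀ j, MeasurableSet (A j))
    (hdisj : Pairwise (Function.onFun Disjoint A)) (hP : P (⋃ j, A j)ᶜ = 0) {f : Ω → ℝ}
    (hf : AEStronglyMeasurable f P) {c : ι → ℝ} {ε : ℝ}
    (hc : ∀ j, ∀ x ∈ A j, |f x - c j| ≤ ε) :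
    |∑ j, P.real (A j) * c j - ∫ x, f x ∂P| ≤ ε * P.real Set.univ := by
  have hint : Integrable f P := integrable_of_forall_abs_sub_le hmeas hP hf hc
  have hsplit : ∫ x, f x ∂P = ∑ j, ∫ x in A j, f x ∂P := by
    conv_lhs => rw [← Measure.restrict_eq_self_of_ae_mem (s := ⋃ j, A j) hP]
    exact integral_iUnion_fintype hmeas hdisj fun _ ↦ hint.integrableOn
  have hcell (j : ι) : |P.real (A j) * c j - ∫ x in A j, f x ∂P| ≤ ε * P.real (A j) := by
    rw [abs_sub_comm, ← smul_eq_mul, ← setIntegral_const,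
      ← integral_sub hint.integrableOn (integrable_const _)]
    exact norm_setIntegral_le_of_norm_le_const (f := fun x ↦ f x - c j) (measure_lt_top _ _) (hc j)
  rw [hsplit, ← Finset.sum_sub_distrib, ← sum_measureReal_eq_measureReal_univ hmeas hdisj hP,
    Finset.mul_sum]
  exact (Finset.abs_sum_le_sum_abs _ _).trans (Finset.sum_le_sum fun j _ ↦ hcell j)

end Partition

section LikelihoodRatio

variable {Ω : Type*}

/-- The likelihood ratio test `1{g ≥ f}` between the densities `f` (null) and `g` (alternative). -/
noncomputable def likelihoodRatioTest (f g : Ω → ℝ) (x : Ω) : ℝ :=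
  if f x ≤ g x then 1 else 0

lemma norm_likelihoodRatioTest_le_one (f g : Ω → ℝ) (x : Ω) :
    ‖likelihoodRatioTest f g x‖ ≤ 1 := by
  unfold likelihoodRatioTest
  split_ifs <;> simp

lemma norm_one_sub_likelihoodRatioTest_le_one (f g : Ω → ℝ) (x : Ω) :
    ‖1 - likelihoodRatioTest f g x‖ ≤ 1 := by
  unfold likelihoodRatioTest
  split_ifs <;> simp

lemma mul_likelihoodRatioTest_add_mul_one_sub (f g : Ω → ℝ) (x : Ω) :
    f x * likelihoodRatioTest f g x + g x * (1 - likelihoodRatioTest f g x) =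
      min (f x) (g x) := by
  unfold likelihoodRatioTest
  split_ifs with h
  · simp [h]
  · simp [le_of_not_ge h]

variable [MeasurableSpace Ω] {μ : Measure Ω} {f g : Ω → ℝ}

lemma measurable_likelihoodRatioTest (hf : Measurable f) (hg : Measurable g) :
    Measurable (likelihoodRatioTest f g) :=
  .ite (measurableSet_le hf hg) measurable_const measurable_const

lemma integral_withDensity_ofReal (hf : Measurable f) (hf0 : 0 ≤ f) (φ : Ω → ℝ) :
    ∫ x, φ x ∂(μ.withDensity fun x ↦ ENNReal.ofReal (f x)) = ∫ x, f x * φ x ∂μ := by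
  rw [integral_withDensity_eq_integral_toReal_smul hf.ennreal_ofReal (by simp)]
  simp only [ENNReal.toReal_ofReal (hf0 _), smul_eq_mul]

lemma bayesError_likelihoodRatioTest (hfm : Measurable f) (hgm : Measurable g)
    (hf0 : 0 ≤ f) (hg0 : 0 ≤ g) (hf : Integrable f μ) (hg : Integrable g μ) :
    bayesError (likelihoodRatioTest f g) (μ.withDensity fun x ↦ ENNReal.ofReal (f x))
        (μ.withDensity fun x ↦ ENNReal.ofReal (g x)) =
      (1 / 2) * ∫ x, min (f x) (g x) ∂μ := by
  have hφ := measurable_likelihoodRatioTest hfm hgm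
  have hfφ : Integrable (fun x ↦ f x * likelihoodRatioTest f g x) μ :=
    hf.mul_bdd hφ.aestronglyMeasurable (.of_forall (norm_likelihoodRatioTest_le_one f g))
  have hgφ : Integrable (fun x ↦ g x * (1 - likelihoodRatioTest f g x)) μ :=
    hg.mul_bdd (hφ.const_sub 1).aestronglyMeasurable
      (.of_forall (norm_one_sub_likelihoodRatioTest_le_one f g))
  rw [bayesError, integral_withDensity_ofReal hfm hf0, integral_withDensity_ofReal hgm hg0,
    ← mul_add, ← integral_add hfφ hgφ]
  simp only [mul_likelihoodRatioTest_add_mul_one_sub]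

end LikelihoodRatio

section Smoothing

lemma integrable_const_mul_indicator_const {Ω : Type*} [MeasurableSpace Ω] {μ : Measure Ω}
    {B : Set Ω} (hB : MeasurableSet B) (hfin : μ B ≠ ⊤) (a c : ℝ) :
    Integrable (fun x ↦ a * B.indicator (fun _ ↦ c) x) μ :=
  ((integrableOn_const hfin).integrable_indicator hB).const_mul a

variable {d N : ℕ} {A : Fin N → Set (EuclideanSpace ℝ (Fin d))} {p q : Fin N → ℝ}

lemma smoothDensity_of_mem (hdisj : Pairwise (Function.onFun Disjoint A)) (p : Fin N → ℝ)
    {j : Fin N} {x : EuclideanSpace ℝ (Fin d)} (hx : x ∈ A j) :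
    smoothDensity A p x = p j * ((volume (A j)).toReal)⁻¹ := by
  rw [smoothDensity, Finset.sum_eq_single_of_mem j (Finset.mem_univ j), Set.indicator_of_mem hx]
  intro i _ hij
  rw [Set.indicator_of_notMem (Set.disjoint_right.mp (hdisj hij) hx), mul_zero]

lemma smoothDensity_of_notMem (p : Fin N → ℝ) {x : EuclideanSpace ℝ (Fin d)}
    (hx : ∀ j, x ∉ A j) : smoothDensity A p x = 0 :=
  Finset.sum_eq_zero fun j _ ↦ by rw [Set.indicator_of_notMem (hx j), mul_zero]

lemma smoothDensity_nonneg (hp : ∀ j, 0 ≤ p j) : 0 ≤ smoothDensity A p := fun _ ↦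
  Finset.sum_nonneg fun j _ ↦ mul_nonneg (hp j) <|
    Set.indicator_nonneg (fun _ _ ↦ inv_nonneg.mpr ENNReal.toReal_nonneg) _

lemma measurable_smoothDensity (hmeas : ∀ j, MeasurableSet (A j)) (p : Fin N → ℝ) :
    Measurable (smoothDensity A p) :=
  Finset.measurable_fun_sum _ fun j _ ↦ (measurable_const.indicator (hmeas j)).const_mul _

lemma smoothDensity_min (hdisj : Pairwise (Function.onFun Disjoint A)) (p q : Fin N → ℝ)
    (x : EuclideanSpace ℝ (Fin d)) :
    smoothDensity A (fun j ↦ min (p j) (q j)) x =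
      min (smoothDensity A p x) (smoothDensity A q x) := by
  by_cases hx : ∃ j, x ∈ A j
  · obtain ⟨j, hj⟩ := hx
    simp only [smoothDensity_of_mem hdisj _ hj]
    exact min_mul_of_nonneg _ _ (inv_nonneg.mpr ENNReal.toReal_nonneg)
  · simp only [smoothDensity_of_notMem _ (not_exists.mp hx), min_self]

lemma integrable_smoothDensity (hmeas : ∀ j, MeasurableSet (A j))
    (hfin : ∀ j, volume (A j) ≠ ⊤) (p : Fin N → ℝ) : Integrable (smoothDensity A p) :=
  integrable_finsetSum _ fun j _ ↦
    integrable_const_mul_indicator_const (hmeas j) (hfin j) (p j) _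

lemma integral_smoothDensity (hmeas : ∀ j, MeasurableSet (A j))
    (hpos : ∀ j, 0 < volume (A j)) (hfin : ∀ j, volume (A j) ≠ ⊤) (p : Fin N → ℝ) :
    ∫ x, smoothDensity A p x = ∑ j, p j := by
  have hvol (j : Fin N) : volume.real (A j) ≠ 0 := (ENNReal.toReal_pos (hpos j).ne' (hfin j)).ne'
  simp only [smoothDensity]
  rw [integral_finsetSum _ fun j _ ↦
    integrable_const_mul_indicator_const (hmeas j) (hfin j) (p j) _]
  refine Finset.sum_congr rfl fun j _ ↦ ?_
  rw [integral_const_mul, integral_indicator_const _ (hmeas j), smul_eq_mul, ← measureReal_def,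
    mul_inv_cancel₀ (hvol j), mul_one]

/-- The uniform smoothing over the cells `A j` of the pmf `p`: the measure with Lebesgue density
`smoothDensity A p`. -/
noncomputable def smoothMeasure (A : Fin N → Set (EuclideanSpace ℝ (Fin d))) (p : Fin N → ℝ) :
    Measure (EuclideanSpace ℝ (Fin d)) :=
  volume.withDensity fun x ↦ ENNReal.ofReal (smoothDensity A p x)

lemma bayesError_smoothMeasure (hmeas : ∀ j, MeasurableSet (A j))
    (hdisj : Pairwise (Function.onFun Disjoint A)) (hpos : ∀ j, 0 < volume (A j))
    (hfin : ∀ j, volume (A j) ≠ ⊤) (hp : ∀ j, 0 ≤ p j) (hq : ∀ j, 0 ≤ q j) :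
    bayesError (likelihoodRatioTest (smoothDensity A p) (smoothDensity A q))
        (smoothMeasure A p) (smoothMeasure A q) = (1 / 2) * ∑ j, min (p j) (q j) := by
  rw [smoothMeasure, smoothMeasure, bayesError_likelihoodRatioTest
    (measurable_smoothDensity hmeas p) (measurable_smoothDensity hmeas q)
    (smoothDensity_nonneg hp) (smoothDensity_nonneg hq)
    (integrable_smoothDensity hmeas hfin p) (integrable_smoothDensity hmeas hfin q)]
  simp only [← smoothDensity_min hdisj, integral_smoothDensity hmeas hpos hfin]

end Smoothing

section Discretization

/-- The discretized uncertainty set `𝒫_N^θ` around the nominal measure `Q`: pmfs `p` on the net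
points `z j` whose `ψ k`-moments are within `θ` of those of `Q`. A measure supported on the net is
encoded by its vector of weights. -/
def discreteMomentSet {Ω ι κ : Type*} [MeasurableSpace Ω] [Fintype ι] (ψ : κ → Ω → ℝ)
    (z : ι → Ω) (Q : Measure Ω) (θ : ℝ) : Set (ι → ℝ) :=
  {p | (∀ j, 0 ≤ p j) ∧ ∑ j, p j = 1 ∧ ∀ k, |∑ j, p j * ψ k (z j) - ∫ x, ψ k x ∂Q| ≤ θ}

lemma measureReal_mem_discreteMomentSet {Ω ι κ : Type*} [MeasurableSpace Ω] [Fintype ι]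
    {ψ : κ → Ω → ℝ} {z : ι → Ω} {A : ι → Set Ω} {P Q : Measure Ω} [IsProbabilityMeasure P]
    {ε θ : ℝ} (hψ : ∀ k, Measurable (ψ k)) (hmeas : ∀ j, MeasurableSet (A j))
    (hdisj : Pairwise (Function.onFun Disjoint A)) (hP : P (⋃ j, A j)ᶜ = 0)
    (hosc : ∀ k j, ∀ x ∈ A j, |ψ k x - ψ k (z j)| ≤ ε)
    (hPQ : ∀ k, |∫ x, ψ k x ∂P - ∫ x, ψ k x ∂Q| ≤ θ) :
    (fun j ↦ P.real (A j)) ∈ discreteMomentSet ψ z Q (θ + ε) := by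
  refine ⟨fun j ↦ measureReal_nonneg, ?_, fun k ↦ ?_⟩
  · rw [sum_measureReal_eq_measureReal_univ hmeas hdisj hP, probReal_univ]
  · have hcollapse := abs_sum_measureReal_mul_sub_integral_le hmeas hdisj hP
      (hψ k).aestronglyMeasurable (hosc k)
    rw [probReal_univ, mul_one] at hcollapse
    calc _ ≤ _ := abs_sub_le _ (∫ x, ψ k x ∂P) _
      _ ≤ ε + θ := add_le_add hcollapse (hPQ k)
      _ = θ + ε := add_comm ε θ

variable {d K N : ℕ} {X : Set (EuclideanSpace ℝ (Fin d))}
  {ψ : Fin K → EuclideanSpace ℝ (Fin d) → ℝ}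
  {Q Q0 Q1 : ProbabilityMeasure (EuclideanSpace ℝ (Fin d))} {z : Fin N → EuclideanSpace ℝ (Fin d)}
  {A : Fin N → Set (EuclideanSpace ℝ (Fin d))} {p p0 p1 : Fin N → ℝ} {η ε θ : ℝ}

lemma discreteMeasure_mem_momentSetE (hψ : ∀ k, Measurable (ψ k)) (hzX : ∀ j, z j ∈ X)
    (hp : p ∈ discreteMomentSet ψ z Q θ) :
    (⟨discreteMeasure z p, isProbabilityMeasure_discreteMeasure z ⟨hp.1, hp.2.1⟩⟩ :
      ProbabilityMeasure (EuclideanSpace ℝ (Fin d))) ∈ momentSetE X ψ Q θ := by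
  refine ⟨discreteMeasure_compl_eq_zero hzX p, fun k ↦ ?_⟩
  rw [ProbabilityMeasure.coe_mk, integral_discreteMeasure z hp.1 (hψ k)]
  exact hp.2.2 k

lemma one_sub_tv_le_worstAffinity {P0 P1 : ProbabilityMeasure (EuclideanSpace ℝ (Fin d))}
    (h0 : P0 ∈ momentSetE X ψ Q0 θ) (h1 : P1 ∈ momentSetE X ψ Q1 θ) :
    1 - tv (P0 : Measure (EuclideanSpace ℝ (Fin d))) P1 ≤ worstAffinity X ψ Q0 Q1 θ := by
  refine le_csSup ⟨1, ?_⟩ ⟨P0, h0, P1, h1, rfl⟩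
  rintro _ ⟨R0, -, R1, -, rfl⟩
  exact sub_le_self _ (tv_nonneg _ _)

lemma sum_min_le_worstAffinity (hψ : ∀ k, Measurable (ψ k)) (hzX : ∀ j, z j ∈ X)
    (h0 : p0 ∈ discreteMomentSet ψ z Q0 θ) (h1 : p1 ∈ discreteMomentSet ψ z Q1 θ) :
    ∑ j, min (p0 j) (p1 j) ≤ worstAffinity X ψ Q0 Q1 θ := by
  have htv : tv (discreteMeasure z p0) (discreteMeasure z p1) ≤ 1 - ∑ j, min (p0 j) (p1 j) :=
    h0.2.1 ▸ tv_discreteMeasure_le z h0.1 h1.1 (h0.2.1.trans h1.2.1.symm)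
  have haffinity := one_sub_tv_le_worstAffinity
    (discreteMeasure_mem_momentSetE hψ hzX h0) (discreteMeasure_mem_momentSetE hψ hzX h1)
  rw [ProbabilityMeasure.coe_mk, ProbabilityMeasure.coe_mk] at haffinity
  exact (le_sub_comm.mp htv).trans haffinity

lemma worstAffinity_le_of_isMaxOn (hψ : ∀ k, Measurable (ψ k))
    (hmeas : ∀ j, MeasurableSet (A j)) (hdisj : Pairwise (Function.onFun Disjoint A))
    (hcover : X ⊆ ⋃ j, A j) (hosc : ∀ k j, ∀ x ∈ A j, |ψ k x - ψ k (z j)| ≤ ε)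
    (hp0 : ∀ j, 0 ≤ p0 j) (hp1 : ∀ j, 0 ≤ p1 j)
    (hopt : IsMaxOn (fun p : (Fin N → ℝ) × (Fin N → ℝ) ↦ ∑ j, min (p.1 j) (p.2 j))
      (discreteMomentSet ψ z Q0 (η + ε) ×ˢ discreteMomentSet ψ z Q1 (η + ε)) (p0, p1)) :
    worstAffinity X ψ Q0 Q1 η ≤ ∑ j, min (p0 j) (p1 j) := by
  refine Real.sSup_le ?_ (Finset.sum_nonneg fun j _ ↦ le_min (hp0 j) (hp1 j))
  rintro _ ⟨P0, hP0, P1, hP1, rfl⟩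
  have hnull {P Q : ProbabilityMeasure (EuclideanSpace ℝ (Fin d))} (hP : P ∈ momentSetE X ψ Q η) :
      (P : Measure (EuclideanSpace ℝ (Fin d))) (⋃ j, A j)ᶜ = 0 :=
    measure_mono_null (Set.compl_subset_compl.mpr hcover) hP.1
  have hmem0 := measureReal_mem_discreteMomentSet hψ hmeas hdisj (hnull hP0) hosc hP0.2
  have hmem1 := measureReal_mem_discreteMomentSet hψ hmeas hdisj (hnull hP1) hosc hP1.2
  have htv := sum_measureReal_sub_sum_min_le_tv (P0 : Measure _) (P1 : Measure _) hmeas hdisj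
  rw [hmem0.2.1] at htv
  exact (sub_le_comm.mp htv).trans (hopt (Set.mk_mem_prod hmem0 hmem1))

end Discretization

theorem robust_test_optimality_gap_general
    {d K N : ℕ} {X : Set (EuclideanSpace ℝ (Fin d))}
    {ψ : Fin K → EuclideanSpace ℝ (Fin d) → ℝ} (hψ : ∀ k, Measurable (ψ k))
    {Q0 Q1 : ProbabilityMeasure (EuclideanSpace ℝ (Fin d))} {Δ η0 η ε : ℝ}
    (hη : η ∈ Set.Icc Δ η0) (hε : 0 ≤ ε) (hηε : η + ε ≤ η0)
    {z : Fin N → EuclideanSpace ℝ (Fin d)} (hzX : ∀ j, z j ∈ X)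
    {A : Fin N → Set (EuclideanSpace ℝ (Fin d))} (hmeas : ∀ j, MeasurableSet (A j))
    (hdisj : Pairwise (Function.onFun Disjoint A)) (hcover : X ⊆ ⋃ j, A j)
    (hosc : ∀ k j, ∀ x ∈ A j, |ψ k x - ψ k (z j)| ≤ ε)
    (hpos : ∀ j, 0 < volume (A j)) (hfin : ∀ j, volume (A j) ≠ ⊤) {p0 p1 : Fin N → ℝ}
    (h0 : p0 ∈ discreteMomentSet ψ z Q0 (η + ε)) (h1 : p1 ∈ discreteMomentSet ψ z Q1 (η + ε))
    (hopt : IsMaxOn (fun p : (Fin N → ℝ) × (Fin N → ℝ) ↦ ∑ j, min (p.1 j) (p.2 j))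
      (discreteMomentSet ψ z Q0 (η + ε) ×ˢ discreteMomentSet ψ z Q1 (η + ε)) (p0, p1))
    {L0 : ℝ} (hL0 : ∀ a ∈ Set.Icc Δ η0, ∀ b ∈ Set.Icc Δ η0,
      |worstAffinity X ψ Q0 Q1 a - worstAffinity X ψ Q0 Q1 b| ≤ L0 * |a - b|) :
    |bayesError (likelihoodRatioTest (smoothDensity A p0) (smoothDensity A p1))
        (smoothMeasure A p0) (smoothMeasure A p1) -
      (1 / 2) * worstAffinity X ψ Q0 Q1 η| ≤ (1 / 2) * (L0 * ε) ∧
    bayesError (likelihoodRatioTest (smoothDensity A p0) (smoothDensity A p1))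
        (smoothMeasure A p0) (smoothMeasure A p1) = (1 / 2) * ∑ j, min (p0 j) (p1 j) := by
  have herror := bayesError_smoothMeasure hmeas hdisj hpos hfin h0.1 h1.1
  have hlower : worstAffinity X ψ Q0 Q1 η ≤ ∑ j, min (p0 j) (p1 j) :=
    worstAffinity_le_of_isMaxOn hψ hmeas hdisj hcover hosc h0.1 h1.1 hopt
  have hupper : ∑ j, min (p0 j) (p1 j) ≤ worstAffinity X ψ Q0 Q1 (η + ε) :=
    sum_min_le_worstAffinity hψ hzX h0 h1
  have hgap : worstAffinity X ψ Q0 Q1 (η + ε) - worstAffinity X ψ Q0 Q1 η ≤ L0 * ε := by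
    simpa only [add_sub_cancel_left, abs_of_nonneg hε] using
      (le_abs_self _).trans (hL0 (η + ε) ⟨hη.1.trans (le_add_of_nonneg_right hε), hηε⟩ η hη)
  refine ⟨?_, herror⟩
  rw [herror, ← mul_sub, abs_of_nonneg (mul_nonneg one_half_pos.le (sub_nonneg.mpr hlower))]
  gcongr
  exact (sub_le_sub_right hupper _).trans hgap

/-- **Theorem 4.** Let `(p0s, p1s)` maximize `∑_j min{p₀(z_j), p₁(z_j)}`
over the discretized relaxed uncertainty sets, let `P₀*, P₁*` be the uniform smoothings
of the corresponding discrete distributions over the partition cells, and let `φ*` be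
the likelihood ratio test between the smoothed densities. Then
`|P_E(φ*; P₀*, P₁*) − γ| ≤ L₀ ε`, and in particular
`P_E(φ*; P₀*, P₁*) = (1/2) ∑_j min{p0s_j, p1s_j}`. -/
theorem robust_test_optimality_gap
    {d : ℕ} (X : Set (EuclideanSpace ℝ (Fin d))) (hX : IsCompact X)
    {K : ℕ} (hK : 0 < K) (ψ : Fin K → EuclideanSpace ℝ (Fin d) → ℝ)
    (hψ : ∀ k, Continuous (ψ k))
    (hLip : ∀ k, ∀ x y : EuclideanSpace ℝ (Fin d), |ψ k x - ψ k y| ≤ ‖x - y‖)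
    (Q0 Q1 : ProbabilityMeasure (EuclideanSpace ℝ (Fin d)))
    (hQ0X : (Q0 : Measure (EuclideanSpace ℝ (Fin d))) Xᶜ = 0)
    (hQ1X : (Q1 : Measure (EuclideanSpace ℝ (Fin d))) Xᶜ = 0)
    (Δ η0 η ε : ℝ) (hΔ : 0 < Δ) (hΔη0 : Δ < η0)
    (hη : η ∈ Set.Icc Δ η0) (hε : 0 ≤ ε) (hηε : η + ε ≤ η0)
    (hη0max : η0 < ⨆ k : Fin K,
      |∫ x, ψ k x ∂(Q1 : Measure (EuclideanSpace ℝ (Fin d))) -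
        ∫ x, ψ k x ∂(Q0 : Measure (EuclideanSpace ℝ (Fin d)))| / 2)
    -- the ε-net `{z_j}` with its associated measurable partition `{A_j}` of `X`
    {N : ℕ} (z : Fin N → EuclideanSpace ℝ (Fin d)) (hzX : ∀ j, z j ∈ X)
    (A : Fin N → Set (EuclideanSpace ℝ (Fin d)))
    (hmeas : ∀ j, MeasurableSet (A j))
    (hdisj : Pairwise (Function.onFun Disjoint A))
    (hcover : (⋃ j, A j) = X)
    (hnet : ∀ j, ∀ x ∈ A j, ‖x - z j‖ ≤ ε)
    (hvolpos : ∀ j, 0 < volume (A j))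
    -- `(p0s, p1s)` is a maximizer of the discretized relaxed problem
    (p0s p1s : Fin N → ℝ)
    (h0feas : (∀ j, 0 ≤ p0s j) ∧ ∑ j, p0s j = 1 ∧ ∀ k,
      |∑ j, p0s j * ψ k (z j) -
        ∫ x, ψ k x ∂(Q0 : Measure (EuclideanSpace ℝ (Fin d)))| ≤ η + ε)
    (h1feas : (∀ j, 0 ≤ p1s j) ∧ ∑ j, p1s j = 1 ∧ ∀ k,
      |∑ j, p1s j * ψ k (z j) -
        ∫ x, ψ k x ∂(Q1 : Measure (EuclideanSpace ℝ (Fin d)))| ≤ η + ε)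
    (hopt : ∀ p0 p1 : Fin N → ℝ,
      ((∀ j, 0 ≤ p0 j) ∧ ∑ j, p0 j = 1 ∧ ∀ k,
        |∑ j, p0 j * ψ k (z j) -
          ∫ x, ψ k x ∂(Q0 : Measure (EuclideanSpace ℝ (Fin d)))| ≤ η + ε) →
      ((∀ j, 0 ≤ p1 j) ∧ ∑ j, p1 j = 1 ∧ ∀ k,
        |∑ j, p1 j * ψ k (z j) -
          ∫ x, ψ k x ∂(Q1 : Measure (EuclideanSpace ℝ (Fin d)))| ≤ η + ε) →
      ∑ j, min (p0 j) (p1 j) ≤ ∑ j, min (p0s j) (p1s j))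
    -- `L₀` is a Lipschitz constant of the worst-case affinity on `[Δ, η₀]`
    (L0 : ℝ)
    (hL0 : ∀ a ∈ Set.Icc Δ η0, ∀ b ∈ Set.Icc Δ η0,
      |worstAffinity X ψ Q0 Q1 a - worstAffinity X ψ Q0 Q1 b| ≤ L0 * |a - b|) :
    |bayesError
        (fun x => if smoothDensity A p0s x ≤ smoothDensity A p1s x then (1 : ℝ) else 0)
        (volume.withDensity fun x => ENNReal.ofReal (smoothDensity A p0s x))
        (volume.withDensity fun x => ENNReal.ofReal (smoothDensity A p1s x)) -
      (1 / 2) * worstAffinity X ψ Q0 Q1 η| ≤ L0 * ε ∧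
    bayesError
        (fun x => if smoothDensity A p0s x ≤ smoothDensity A p1s x then (1 : ℝ) else 0)
        (volume.withDensity fun x => ENNReal.ofReal (smoothDensity A p0s x))
        (volume.withDensity fun x => ENNReal.ofReal (smoothDensity A p1s x)) =
      (1 / 2) * ∑ j, min (p0s j) (p1s j) := by
  have hfin (j : Fin N) : volume (A j) ≠ ⊤ :=
    measure_ne_top_of_subset (hcover ▸ Set.subset_iUnion A j) hX.measure_ne_top
  obtain ⟨hgap, herror⟩ := robust_test_optimality_gap_general (fun k ↦ (hψ k).measurable) hη hε hηε
    hzX hmeas hdisj hcover.ge (fun k j x hx ↦ (hLip k x (z j)).trans (hnet j x hx)) hvolpos hfin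
    h0feas h1feas (fun p hp ↦ hopt p.1 p.2 hp.1 hp.2) hL0
  exact ⟨hgap.trans (by linarith [(abs_nonneg _).trans hgap]), herror⟩
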